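/- For every integer t ≥ 1 there exists a constant c_t such that for every graph G with no K_t minor and every integer r ≥ 0, the minimum size of an r-dominating set of G is at most c_t times the maximum size of an r-independent set of G. -/

import Mathlib

/-- The ball of radius `r` centered at `v` in the graph metric of `G`:
all vertices `u` with `d_G(v,u) ≤ r` (in particular, `u` must be reachable from `v`). -/
def SimpleGraph.gBall {V : Type*} (G : SimpleGraph V) (v : V) (r : ℕ) : Set V :=
  {u | G.Reachable v u ∧ G.dist v u ≤ r}

/-- A ball hypergraph of `G` is given by its edge set `E`: a collection of subsets of
`V(G)`, each of which is a ball of `G`. -/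
def IsBallHypergraph {V : Type*} (G : SimpleGraph V) (E : Set (Set V)) : Prop :=
  ∀ e ∈ E, ∃ v r, e = G.gBall v r

/-- `H` is a minor of `G`: there are pairwise disjoint connected nonempty branch sets
in `G`, one for each vertex of `H`, with an edge of `G` between the branch sets of any
two adjacent vertices of `H`. -/
def GraphMinor {W : Type*} {V : Type*} (H : SimpleGraph W) (G : SimpleGraph V) : Prop :=
  ∃ f : W → Set V,
    (∀ w, (G.induce (f w)).Connected) ∧
    (Pairwise fun w₁ w₂ => Disjoint (f w₁) (f w₂)) ∧
    (∀ w₁ w₂, H.Adj w₁ w₂ → ∃ u ∈ f w₁, ∃ v ∈ f w₂, G.Adj u v)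

/-- The matching number of the hypergraph with edge set `E`: the maximum number of
pairwise disjoint edges. -/
noncomputable def matchingNumber {V : Type*} [Fintype V] (E : Set (Set V)) : ℕ :=
  sSup {n | ∃ M : Finset (Set V), ↑M ⊆ E ∧ (M : Set (Set V)).Pairwise Disjoint ∧ M.card = n}

/-- The transversal number of the hypergraph with edge set `E`: the minimum size of a
set of vertices meeting every edge. -/
noncomputable def transversalNumber {V : Type*} [Fintype V] (E : Set (Set V)) : ℕ :=
  sInf {n | ∃ T : Finset V, (∀ e ∈ E, ∃ v ∈ T, v ∈ e) ∧ T.card = n}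

/-! Let `C` be a finite set of centers in a graph without `K_t` minor, and join two centers if their
Voronoi cells are adjacent. The resulting graph is a minor, so by Mader's theorem it is degenerate.
Moreover, walking from one center to another through a point `z` of both of their balls of radius
`r`, one only meets cells of centers whose ball contains `z`. In this sense the balls of radius `r`
have *sparse supports*.

For families of sets with sparse supports, the size of a minimum transversal is bounded in terms of
the size of a maximum packing by linear programming duality. On the one hand, a distribution on the
points giving every set weight at least `1 / N` yields a transversal of size `O(N)`: a maximal
subfamily of barely overlapping sets has size `O(N)`, every set has a large overlap with one of its
members, and inside each member there is an `ε`-net of bounded size, since the VC dimension is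
bounded. On the other hand, if under some distribution on the sets every point is covered with
probability less than `1 / N`, then a sampling argument of Clarkson and Shor shows that two random
sets meet with probability `O(1 / N)`, so by Turán's theorem some `Ω(N)` sets are pairwise disjoint.
-/

open Finset

universe u v

/-- `H` is a minor of `G` all of whose branch sets are contained in `s`. -/
def GraphMinorIn {W V : Type*} (H : SimpleGraph W) (G : SimpleGraph V) (s : Set V) : Prop :=
  ∃ f : W → Set V, (∀ w, f w ⊆ s) ∧ (∀ w, (G.induce (f w)).Connected) ∧
    Pairwise (Function.onFun Disjoint f) ∧
    ∀ w₁ w₂, H.Adj w₁ w₂ → ∃ u ∈ f w₁, ∃ v ∈ f w₂, G.Adj u v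

lemma GraphMinorIn.graphMinor {W V : Type*} {H : SimpleGraph W} {G : SimpleGraph V} {s : Set V}
    (h : GraphMinorIn H G s) : GraphMinor H G :=
  let ⟨f, _, hconn, hdisj, hadj⟩ := h
  ⟨f, hconn, hdisj, hadj⟩

section Contraction

variable {U W V : Type*} {H : SimpleGraph W} {G : SimpleGraph V}

lemma connected_induce_singleton (v : V) : (G.induce {v}).Connected := by
  rw [SimpleGraph.induce_singleton_eq_top]
  exact SimpleGraph.connected_top

lemma connected_induce_biUnion {X : Set W} {F : W → Set V} (hX : (H.induce X).Connected)
    (hF : ∀ w ∈ X, (G.induce (F w)).Connected)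
    (hadj : ∀ a ∈ X, ∀ b ∈ X, H.Adj a b → ∃ u ∈ F a, ∃ v ∈ F b, G.Adj u v) :
    (G.induce (⋃ w ∈ X, F w)).Connected := by
  have hsub : ∀ w ∈ X, F w ⊆ ⋃ w ∈ X, F w := fun w hw => Set.subset_biUnion_of_mem hw
  have within : ∀ w (hw : w ∈ X) x (hx : x ∈ F w) y (hy : y ∈ F w),
      (G.induce (⋃ w ∈ X, F w)).Reachable ⟨x, hsub w hw hx⟩ ⟨y, hsub w hw hy⟩ :=
    fun w hw x hx y hy => ((hF w hw).preconnected ⟨x, hx⟩ ⟨y, hy⟩).map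
      (G.induceHomOfLE (hsub w hw)).toHom
  have along : ∀ {a b : X}, (H.induce X).Walk a b → ∀ x (hx : x ∈ F a) y (hy : y ∈ F b),
      (G.induce (⋃ w ∈ X, F w)).Reachable ⟨x, hsub a a.2 hx⟩ ⟨y, hsub b b.2 hy⟩ := by
    intro a b p
    induction p with
    | nil => exact within _ (Subtype.prop _)
    | @cons a c b hac _ ih =>
      intro x hx y hy
      obtain ⟨x', hx', y', hy', hxy⟩ := hadj a a.2 c c.2 hac
      have hstep : (G.induce (⋃ w ∈ X, F w)).Adj ⟨x', hsub a a.2 hx'⟩ ⟨y', hsub c c.2 hy'⟩ := hxy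
      exact (within a a.2 x hx x' hx').trans (hstep.reachable.trans (ih y' hy' y hy))
  obtain ⟨w, hw⟩ := hX.nonempty
  obtain ⟨v, hv⟩ := (hF w hw).nonempty
  refine SimpleGraph.connected_iff _ |>.2 ⟨?_, ⟨v, hsub w hw hv⟩⟩
  rintro ⟨x, hx⟩ ⟨y, hy⟩
  obtain ⟨a, ha, hxa⟩ := Set.mem_iUnion₂.1 hx
  obtain ⟨b, hb, hyb⟩ := Set.mem_iUnion₂.1 hy
  obtain ⟨p⟩ := hX.preconnected ⟨a, ha⟩ ⟨b, hb⟩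
  exact along p x hxa y hyb

lemma GraphMinorIn.of_branchSets {K : SimpleGraph U} {S : Set W} {T : Set V} {F : W → Set V}
    (h : GraphMinorIn K H S) (hsub : ∀ w ∈ S, F w ⊆ T)
    (hconn : ∀ w ∈ S, (G.induce (F w)).Connected) (hdisj : S.PairwiseDisjoint F)
    (hadj : ∀ a ∈ S, ∀ b ∈ S, H.Adj a b → ∃ u ∈ F a, ∃ v ∈ F b, G.Adj u v) :
    GraphMinorIn K G T := by
  obtain ⟨f, fsub, fconn, fdisj, fadj⟩ := h
  refine ⟨fun u => ⋃ w ∈ f u, F w, fun u => Set.iUnion₂_subset fun w hw => hsub w (fsub u hw),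
    fun u => connected_induce_biUnion (fconn u) (fun w hw => hconn w (fsub u hw))
      fun a ha b hb => hadj a (fsub u ha) b (fsub u hb), fun u₁ u₂ hu => ?_, fun u₁ u₂ hu => ?_⟩
  · simp only [Function.onFun, Set.disjoint_iUnion_left, Set.disjoint_iUnion_right]
    exact fun b hb a ha => hdisj (fsub u₁ ha) (fsub u₂ hb) ((fdisj hu).ne_of_mem ha hb)
  · obtain ⟨a, ha, b, hb, hab⟩ := fadj u₁ u₂ hu
    obtain ⟨x, hx, y, hy, hxy⟩ := hadj a (fsub u₁ ha) b (fsub u₂ hb) hab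
    exact ⟨x, Set.mem_biUnion ha hx, y, Set.mem_biUnion hb hy, hxy⟩

end Contraction

section Mader

variable {V : Type*} {G : SimpleGraph V}

lemma graphMinorIn_top_one {S : Set V} (hS : S.Nonempty) :
    GraphMinorIn (⊤ : SimpleGraph (Fin 1)) G S := by
  obtain ⟨v, hv⟩ := hS
  exact ⟨fun _ => {v}, fun _ => Set.singleton_subset_iff.2 hv,
    fun _ => connected_induce_singleton v,
    fun i j hij => absurd (Subsingleton.elim i j) hij,
    fun i j hij => absurd (Subsingleton.elim i j) hij.ne⟩

lemma GraphMinorIn.top_succ {t : ℕ} {S : Set V} {v : V} (hv : v ∈ S)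
    (h : GraphMinorIn (⊤ : SimpleGraph (Fin t)) G (S ∩ G.neighborSet v)) :
    GraphMinorIn (⊤ : SimpleGraph (Fin (t + 1))) G S := by
  obtain ⟨f, fsub, fconn, fdisj, fadj⟩ := h
  have hvf : ∀ i, v ∉ f i := fun i hi => G.irrefl (fsub i hi).2
  have hvadj : ∀ i, ∃ y ∈ f i, G.Adj v y := fun i =>
    let ⟨y, hy⟩ := (fconn i).nonempty
    ⟨y, hy, (fsub i hy).2⟩
  refine ⟨Fin.cons {v} f, ?_, ?_, ?_, ?_⟩
  · rw [Fin.forall_fin_succ]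
    exact ⟨Set.singleton_subset_iff.2 hv, fun i => (fsub i).trans Set.inter_subset_left⟩
  · rw [Fin.forall_fin_succ]
    exact ⟨connected_induce_singleton v, fconn⟩
  · simp only [Pairwise, Fin.forall_fin_succ, Function.onFun, Fin.cons_zero, Fin.cons_succ,
      Set.disjoint_singleton_left, Set.disjoint_singleton_right]
    exact ⟨⟨fun h => absurd rfl h, fun i _ => hvf i⟩,
      fun i => ⟨fun _ => hvf i, fun j hij => fdisj fun h => hij (congrArg Fin.succ h)⟩⟩
  · simp only [Fin.forall_fin_succ, Fin.cons_zero, Fin.cons_succ, Set.mem_singleton_iff,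
      exists_eq_left]
    refine ⟨⟨fun h => absurd rfl h.ne, fun i _ => hvadj i⟩, fun i => ⟨fun _ => ?_, fun j hij =>
      fadj i j fun h => hij.ne (congrArg Fin.succ h)⟩⟩
    obtain ⟨y, hy, hvy⟩ := hvadj i
    exact ⟨y, hy, hvy.symm⟩

open Classical in
/-- The graph obtained from `G` by contracting `b` into `a`, on the same vertex type: `b` survives
as an isolated vertex. -/
noncomputable def contract (G : SimpleGraph V) (a b : V) : SimpleGraph V :=
  G.map fun x => if x = b then a else x

open Classical in
lemma contract_adj {a b x y : V} : (contract G a b).Adj x y ↔ x ≠ y ∧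
    ∃ x' y', G.Adj x' y' ∧ (if x' = b then a else x') = x ∧ (if y' = b then a else y') = y :=
  SimpleGraph.map_adj' _ _ _ _

open Classical in
lemma GraphMinorIn.of_contract {U : Type*} {K : SimpleGraph U} {S : Finset V} {a b : V}
    (hb : b ∈ S) (hab : G.Adj a b)
    (h : GraphMinorIn K (contract G a b) (S.erase b : Finset V)) : GraphMinorIn K G S := by
  let F : V → Set V := fun w => {x | (if x = b then a else x) = w}
  have hFa : F a = {a, b} := by ext x; simp only [F, Set.mem_ofPred_eq]; grind
  have hF : ∀ w, w ≠ a → w ≠ b → F w = {w} := fun w hwa hwb => by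
    ext x; simp only [F, Set.mem_ofPred_eq]; grind
  refine h.of_branchSets (F := F) (fun w hw => ?_) (fun w hw => ?_) ?_ fun x _ y _ hxy => ?_
  · intro x hx
    have := mem_of_mem_erase hw
    simp only [F, Set.mem_ofPred_eq] at hx
    grind
  · by_cases hwa : w = a
    · rw [hwa, hFa]
      exact SimpleGraph.induce_pair_connected_of_adj hab
    · rw [hF w hwa (ne_of_mem_erase hw)]
      exact connected_induce_singleton w
  · exact fun x _ y _ hxy => Set.disjoint_left.2 fun z hx hy => hxy (hx.symm.trans hy)
  · obtain ⟨-, x', y', hxy', hx', hy'⟩ := contract_adj.1 hxy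
    exact ⟨x', hx', y', hy', hxy'⟩

open Classical in
-- The pairs lost are those joining `b` to `a` or to a common neighbor of `a` and `b`.
lemma card_interedges_le_card_interedges_contract {S : Finset V} {a b : V} (ha : a ∈ S)
    (hab : G.Adj a b) :
    #(G.interedges S S) ≤ #((contract G a b).interedges (S.erase b) (S.erase b)) +
      2 * (#{x ∈ S | G.Adj a x ∧ G.Adj b x} + 1) := by
  set N : Finset V := insert a {x ∈ S | G.Adj a x ∧ G.Adj b x}
  set B : Finset (V × V) := {b} ×ˢ N ∪ N ×ˢ {b} with hB
  have hBcard : #B ≤ 2 * (#{x ∈ S | G.Adj a x ∧ G.Adj b x} + 1) := by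
    have hN : #N ≤ #{x ∈ S | G.Adj a x ∧ G.Adj b x} + 1 := card_insert_le _ _
    have := card_union_le ({b} ×ˢ N) (N ×ˢ {b})
    rw [card_product, card_product, card_singleton] at this
    lia
  have hmem : ∀ x y, (x, y) ∈ G.interedges S S \ B ↔ (x ∈ S ∧ y ∈ S ∧ G.Adj x y) ∧
      ¬ (x = b ∧ (y = a ∨ y ∈ S ∧ G.Adj a y ∧ G.Adj b y)) ∧
      ¬ (y = b ∧ (x = a ∨ x ∈ S ∧ G.Adj a x ∧ G.Adj b x)) := by
    intro x y
    simp only [hB, N, mem_sdiff, SimpleGraph.mk_mem_interedges_iff, mem_union, mem_product,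
      mem_singleton, mem_insert, mem_filter]
    tauto
  have hinj : #(G.interedges S S \ B) ≤
      #((contract G a b).interedges (S.erase b) (S.erase b)) := by
    refine card_le_card_of_injOn
      (fun e => (if e.1 = b then a else e.1, if e.2 = b then a else e.2)) ?_ ?_
    · rintro ⟨x, y⟩ hxy
      obtain ⟨⟨hx, hy, hadj⟩, hxb, hyb⟩ := (hmem x y).1 hxy
      refine (SimpleGraph.mk_mem_interedges_iff _).2
        ⟨?_, ?_, contract_adj.2 ⟨?_, x, y, hadj, rfl, rfl⟩⟩
      all_goals
        have := hadj.ne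
        have := hab.ne
        grind
    · rintro ⟨x, y⟩ hxy ⟨x', y'⟩ hxy' h
      obtain ⟨⟨hx, hy, hadj⟩, hxb, hyb⟩ := (hmem x y).1 hxy
      obtain ⟨⟨hx', hy', hadj'⟩, hxb', hyb'⟩ := (hmem x' y').1 hxy'
      simp only [Prod.mk.injEq] at h
      have := hadj.ne
      have := hadj'.ne
      have := hadj.symm
      have := hadj'.symm
      grind
  have := le_card_sdiff B (G.interedges S S)
  lia

open Classical in
lemma mul_card_le_card_interedges {S : Finset V} {d : ℕ}
    (h : ∀ x ∈ S, d ≤ #{y ∈ S | G.Adj x y}) : d * #S ≤ #(G.interedges S S) := by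
  rw [SimpleGraph.interedges_def, card_filter, sum_product, mul_comm]
  simp only [← card_filter]
  exact card_nsmul_le_sum _ _ _ h

open Classical in
/-- A weak form of **Mader's theorem**. Either some edge lies in few triangles, and contracting it
preserves the density, or the neighborhood of every vertex has large minimum degree, and contains
a smaller complete minor by induction. -/
theorem graphMinorIn_top_of_mul_card_le (t : ℕ) {V : Type*} (G : SimpleGraph V) (S : Finset V)
    (hS : S.Nonempty) (hcard : 2 ^ (t + 1) * #S ≤ #(G.interedges S S)) :
    GraphMinorIn (⊤ : SimpleGraph (Fin (t + 1))) G S := by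
  induction t generalizing G S with
  | zero => exact graphMinorIn_top_one (by exact_mod_cast hS)
  | succ t ih =>
    induction hn : #S generalizing G S with
    | zero => exact absurd (card_eq_zero.1 hn) hS.ne_empty
    | succ n ihn =>
      by_cases hlow : ∃ a ∈ S, ∃ b ∈ S, G.Adj a b ∧
          #{x ∈ S | G.Adj a x ∧ G.Adj b x} + 1 ≤ 2 ^ (t + 1)
      · obtain ⟨a, ha, b, hb, hab, hlow⟩ := hlow
        have herase : #(S.erase b) = n := by rw [card_erase_of_mem hb, hn, Nat.add_sub_cancel]
        refine .of_contract hb hab (ihn _ _ ⟨a, mem_erase.2 ⟨hab.ne, ha⟩⟩ ?_ herase)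
        have := card_interedges_le_card_interedges_contract ha hab
        rw [hn, pow_succ] at hcard
        rw [herase, pow_succ]
        linarith
      · push Not at hlow
        have hpos : 0 < 2 ^ (t + 1 + 1) * #S := Nat.mul_pos (by positivity) hS.card_pos
        obtain ⟨⟨v, w⟩, hvw⟩ := card_pos.1 (hpos.trans_le hcard)
        obtain ⟨hv, hw, hvw⟩ := (SimpleGraph.mk_mem_interedges_iff _).1 hvw
        have hcoe : ((S.filter (G.Adj v) : Finset V) : Set V) = ↑S ∩ G.neighborSet v := by
          ext x; simp
        refine .top_succ hv (hcoe ▸ ih G _ ⟨w, mem_filter.2 ⟨hw, hvw⟩⟩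
          (mul_card_le_card_interedges fun x hx => ?_))
        obtain ⟨hx, hvx⟩ := mem_filter.1 hx
        rw [filter_filter]
        exact Nat.lt_succ_iff.1 (hlow v hv x hx hvx)

end Mader

section Supports

variable {V : Type u} {W : Type v}

open Classical in
/-- Every nonempty set of vertices from `C` contains a vertex with at most `D` neighbors in that
set. -/
def IsDegenerateOn (E : SimpleGraph V) (D : ℕ) (C : Finset V) : Prop :=
  ∀ S ⊆ C, S.Nonempty → ∃ u ∈ S, #{v ∈ S | E.Adj u v} ≤ D

/-- Think of `R` as the family of sets `{x | R c x}` indexed by `c`. The graph `E` supports the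
members of the family with index in `C` if, for every point `x`, the members containing `x` induce
a subgraph of `E` without isolated vertices, unless there is only one such member. -/
def IsSupport (E : SimpleGraph V) (R : V → W → Prop) (C : Finset V) : Prop :=
  ∀ x, ∀ c ∈ C, ∀ c' ∈ C, c ≠ c' → R c x → R c' x → ∃ d ∈ C, R d x ∧ E.Adj c d

/-- Every finite subfamily of the family of sets `{x | R c x}` has a `D`-degenerate support. -/
def HasSparseSupports (D : ℕ) (R : V → W → Prop) : Prop :=
  ∀ C : Finset V, ∃ E : SimpleGraph V, IsDegenerateOn E D C ∧ IsSupport E R C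

end Supports

section Voronoi

variable {V : Type*} [LinearOrder V] {G : SimpleGraph V} {C : Finset V} {x z c c' : V}

/-- The Voronoi cell of `c` with respect to the set of centers `C`, with ties broken by the linear
order; the vertices not connected to any center are in no cell. -/
def voronoiCell (G : SimpleGraph V) (C : Finset V) (c : V) : Set V :=
  {x | c ∈ C ∧ G.edist x c ≠ ⊤ ∧ ∀ c' ∈ C, toLex (G.edist x c, c) ≤ toLex (G.edist x c', c')}

lemma edist_le_of_mem_voronoiCell (h : x ∈ voronoiCell G C c) (hc' : c' ∈ C) :
    G.edist x c ≤ G.edist x c' :=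
  Prod.Lex.monotone_fst _ _ (h.2.2 c' hc')

lemma eq_of_mem_voronoiCell (h : x ∈ voronoiCell G C c) (h' : x ∈ voronoiCell G C c') : c = c' :=
  congrArg (fun p => (ofLex p).2) (le_antisymm (h.2.2 c' h'.1) (h'.2.2 c h.1))

lemma self_mem_voronoiCell (hc : c ∈ C) : c ∈ voronoiCell G C c := by
  refine ⟨hc, by simp, fun c' _ => ?_⟩
  rcases eq_or_ne c c' with rfl | hne
  · exact le_rfl
  · rw [Prod.Lex.toLex_le_toLex, SimpleGraph.edist_self]
    exact Or.inl (SimpleGraph.edist_pos_of_ne hne)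

lemma exists_mem_voronoiCell (hc : c ∈ C) (h : G.edist x c ≠ ⊤) : ∃ d, x ∈ voronoiCell G C d := by
  obtain ⟨d, hd, hmin⟩ := C.exists_min_image (fun d => toLex (G.edist x d, d)) ⟨c, hc⟩
  exact ⟨d, hd, ne_top_of_le_ne_top h (Prod.Lex.monotone_fst _ _ (hmin c hc)), hmin⟩

lemma mem_voronoiCell_of_edist_add_le (h : x ∈ voronoiCell G C c)
    (hz : G.edist x z + G.edist z c ≤ G.edist x c) : z ∈ voronoiCell G C c := by
  have hsum : G.edist x z + G.edist z c ≠ ⊤ := ne_top_of_le_ne_top h.2.1 hz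
  have hxz : G.edist x z ≠ ⊤ := ne_top_of_le_ne_top hsum le_self_add
  refine ⟨h.1, ne_top_of_le_ne_top hsum le_add_self, fun c' hc' => ?_⟩
  have htri : G.edist x c' ≤ G.edist x z + G.edist z c' := G.edist_triangle
  have hle : G.edist z c ≤ G.edist z c' := (ENat.add_le_add_iff_left hxz).1
    (hz.trans ((edist_le_of_mem_voronoiCell h hc').trans htri))
  rw [Prod.Lex.toLex_le_toLex]
  refine hle.lt_or_eq.imp_right fun (heq : G.edist z c = G.edist z c') => ⟨heq, ?_⟩
  rw [← heq] at htri
  rcases Prod.Lex.toLex_le_toLex.1 (h.2.2 c' hc') with hlt | heq'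
  · exact absurd (htri.trans hz) hlt.not_ge
  · exact heq'.2

lemma edist_add_edist_le_length {u v w : V} (p : G.Walk u v) (hw : w ∈ p.support) :
    G.edist u w + G.edist w v ≤ p.length := by
  rw [← p.take_spec hw, SimpleGraph.Walk.length_append, Nat.cast_add]
  exact add_le_add (G.edist_le _) (G.edist_le _)

lemma connected_induce_voronoiCell (hc : c ∈ C) : (G.induce (voronoiCell G C c)).Connected := by
  refine SimpleGraph.induce_connected_of_patches c (self_mem_voronoiCell hc) fun {x} hx => ?_
  obtain ⟨p, hp⟩ := SimpleGraph.exists_walk_of_edist_ne_top hx.2.1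
  exact ⟨_, subset_rfl, self_mem_voronoiCell hc, hx, ⟨(p.induce _ fun z hz =>
    mem_voronoiCell_of_edist_add_le hx (hp ▸ edist_add_edist_le_length p hz)).reverse⟩⟩

/-- The graph in which two centers are adjacent if some edge of `G` joins their Voronoi cells. -/
def voronoiGraph (G : SimpleGraph V) (C : Finset V) : SimpleGraph V where
  Adj c c' := c ≠ c' ∧ ∃ x ∈ voronoiCell G C c, ∃ y ∈ voronoiCell G C c', G.Adj x y
  symm := ⟨fun _ _ ⟨hne, x, hx, y, hy, hxy⟩ => ⟨hne.symm, y, hy, x, hx, hxy.symm⟩⟩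
  loopless := ⟨fun _ h => h.1 rfl⟩

lemma GraphMinorIn.of_voronoiGraph {U : Type*} {K : SimpleGraph U} {S : Set V} (hS : S ⊆ C)
    (h : GraphMinorIn K (voronoiGraph G C) S) : GraphMinorIn K G Set.univ :=
  h.of_branchSets (F := voronoiCell G C) (fun _ _ => Set.subset_univ _)
    (fun _ hc => connected_induce_voronoiCell (hS hc))
    (fun _ _ _ _ hne => Set.disjoint_left.2 fun _ hx hx' => hne (eq_of_mem_voronoiCell hx hx'))
    fun _ _ _ _ hadj => hadj.2

-- Let `z` be on a walk from `a` to `x` of length at most `r`. If `z` is in the cell of `d`, then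
-- `d` is at least as close to `z`, hence to `x`, as `a` is.
lemma exists_mem_voronoiCell_of_mem_support {r : ℕ} {a : V} (ha : a ∈ C) (p : G.Walk a x)
    (hp : p.length ≤ r) (hz : z ∈ p.support) :
    ∃ d ∈ C, z ∈ voronoiCell G C d ∧ G.edist d x ≤ r := by
  have hza : G.edist z a ≠ ⊤ := by
    rw [SimpleGraph.edist_comm]
    exact SimpleGraph.edist_ne_top_iff_reachable.2 ⟨p.takeUntil _ hz⟩
  obtain ⟨d, hd⟩ := exists_mem_voronoiCell ha hza
  refine ⟨d, hd.1, hd, ?_⟩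
  calc G.edist d x ≤ G.edist d z + G.edist z x := G.edist_triangle
    _ ≤ G.edist a z + G.edist z x := by
        rw [G.edist_comm (u := d), G.edist_comm (u := a)]
        exact add_le_add_left (edist_le_of_mem_voronoiCell hd ha) _
    _ ≤ p.length := edist_add_edist_le_length p hz
    _ ≤ r := by exact_mod_cast hp

lemma isSupport_voronoiGraph (G : SimpleGraph V) (C : Finset V) (r : ℕ) :
    IsSupport (voronoiGraph G C) (fun u v => G.edist u v ≤ r) C := by
  intro x c hc c' hc' hne hx hx'
  obtain ⟨p, hp⟩ :=
    SimpleGraph.exists_walk_of_edist_ne_top (ne_top_of_le_ne_top (ENat.natCast_ne_top r) hx)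
  obtain ⟨q, hq⟩ :=
    SimpleGraph.exists_walk_of_edist_ne_top (ne_top_of_le_ne_top (ENat.natCast_ne_top r) hx')
  rw [← hp, Nat.cast_le] at hx
  rw [← hq, Nat.cast_le] at hx'
  obtain ⟨e, he, hfst, hsnd⟩ := (p.append q.reverse).exists_boundary_dart (voronoiCell G C c)
    (self_mem_voronoiCell hc) fun h => hne (eq_of_mem_voronoiCell h (self_mem_voronoiCell hc'))
  have hmem := SimpleGraph.Walk.dart_snd_mem_support_of_mem_darts _ he
  rw [SimpleGraph.Walk.mem_support_append_iff, SimpleGraph.Walk.support_reverse,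
    List.mem_reverse] at hmem
  obtain ⟨d, hd, hed, hdx⟩ := hmem.elim (exists_mem_voronoiCell_of_mem_support hc p hx)
    (exists_mem_voronoiCell_of_mem_support hc' q hx')
  exact ⟨d, hd, hdx, fun h => hsnd (h ▸ hed), e.fst, hfst, e.snd, hed, e.adj⟩

lemma isDegenerateOn_voronoiGraph {t : ℕ} (hG : ¬ GraphMinor (⊤ : SimpleGraph (Fin (t + 1))) G)
    (C : Finset V) : IsDegenerateOn (voronoiGraph G C) (2 ^ (t + 1)) C := by
  classical
  intro S hSC hS
  by_contra! hdeg
  have hminor := graphMinorIn_top_of_mul_card_le t (voronoiGraph G C) S hS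
    (mul_card_le_card_interedges fun x hx => (hdeg x hx).le)
  exact hG (hminor.of_voronoiGraph (coe_subset.2 hSC)).graphMinor

end Voronoi

theorem hasSparseSupports_edist_le {V : Type*} {G : SimpleGraph V} {t : ℕ}
    (hG : ¬ GraphMinor (⊤ : SimpleGraph (Fin (t + 1))) G) (r : ℕ) :
    HasSparseSupports (2 ^ (t + 1)) fun u v => G.edist u v ≤ r := by
  classical
  let : LinearOrder V := linearOrderOfSTO WellOrderingRel
  exact fun C => ⟨_, isDegenerateOn_voronoiGraph hG C, isSupport_voronoiGraph G C r⟩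

section Degenerate

variable {V : Type*} {E : SimpleGraph V} {D : ℕ} {C : Finset V}

open Classical in
-- Remove vertices of small degree one by one and orient the edges away from the removed vertex.
lemma IsDegenerateOn.exists_orientation (h : IsDegenerateOn E D C) :
    ∃ out : V → Finset V, (∀ u, #(out u) ≤ D) ∧
      ∀ u ∈ C, ∀ v ∈ C, E.Adj u v → v ∈ out u ∨ u ∈ out v := by
  induction C using Finset.strongInduction with
  | H C ih =>
    rcases C.eq_empty_or_nonempty with rfl | hne
    · exact ⟨fun _ => ∅, by simp, by simp⟩
    obtain ⟨a, ha, hdeg⟩ := h C subset_rfl hne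
    obtain ⟨out, hcard, hout⟩ :=
      ih (C.erase a) (erase_ssubset ha) fun S hS => h S (hS.trans (erase_subset _ _))
    refine ⟨Function.update out a {v ∈ C | E.Adj a v}, fun u => ?_, fun u hu v hv huv => ?_⟩
    · rcases eq_or_ne u a with rfl | hua
      · rwa [Function.update_self]
      · rw [Function.update_of_ne hua]
        exact hcard u
    · rcases eq_or_ne u a with rfl | hua
      · exact Or.inl (by simpa only [Function.update_self] using mem_filter.2 ⟨hv, huv⟩)
      rcases eq_or_ne v a with rfl | hva
      · exact Or.inr (by simpa only [Function.update_self] using mem_filter.2 ⟨hu, huv.symm⟩)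
      rw [Function.update_of_ne hua, Function.update_of_ne hva]
      exact hout u (mem_erase.2 ⟨hua, hu⟩) v (mem_erase.2 ⟨hva, hv⟩) huv

open Classical in
lemma IsDegenerateOn.sum_min_le (h : IsDegenerateOn E D C) {g : V → ℝ} (hg : ∀ v, 0 ≤ g v) :
    ∑ a ∈ C ×ˢ C with E.Adj a.1 a.2, min (g a.1) (g a.2) ≤ 2 * D * ∑ u ∈ C, g u := by
  obtain ⟨out, hcard, hout⟩ := h.exists_orientation
  have hsum_out : ∑ u ∈ C, ∑ v ∈ C, (if v ∈ out u then g u else 0) ≤ D * ∑ u ∈ C, g u := by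
    rw [mul_sum]
    refine sum_le_sum fun u _ => ?_
    rw [← sum_filter, sum_const, nsmul_eq_mul]
    refine mul_le_mul_of_nonneg_right (Nat.cast_le.2 ((card_le_card fun v hv => ?_).trans
      (hcard u))) (hg u)
    exact (mem_filter.1 hv).2
  calc ∑ a ∈ C ×ˢ C with E.Adj a.1 a.2, min (g a.1) (g a.2)
      ≤ ∑ u ∈ C, ∑ v ∈ C, ((if v ∈ out u then g u else 0) + if u ∈ out v then g v else 0) := by
        rw [sum_filter, sum_product]
        refine sum_le_sum fun u hu => sum_le_sum fun v hv => ?_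
        have := hg u
        have := hg v
        have := min_le_left (g u) (g v)
        have := min_le_right (g u) (g v)
        have := hout u hu v hv
        split_ifs <;> first | linarith | tauto
    _ ≤ 2 * D * ∑ u ∈ C, g u := by
        simp only [sum_add_distrib]
        rw [sum_comm (f := fun u v => if u ∈ out v then g v else 0)]
        linarith

open Classical in
lemma IsDegenerateOn.card_adj_le (h : IsDegenerateOn E D C) :
    #{a ∈ C ×ˢ C | E.Adj a.1 a.2} ≤ 2 * D * #C := by
  have := h.sum_min_le (g := fun _ => 1) fun _ => zero_le_one
  simp only [min_self, sum_const, nsmul_eq_mul, mul_one] at this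
  exact_mod_cast this

open Classical in
lemma IsSupport.card_filter_le {W : Type*} {R : V → W → Prop} (h : IsSupport E R C) (x : W) :
    #{u ∈ C | R u x} ≤ 1 + #{a ∈ C ×ˢ C | E.Adj a.1 a.2 ∧ R a.1 x ∧ R a.2 x} := by
  rcases le_or_gt #{u ∈ C | R u x} 1 with h1 | h1
  · exact h1.trans (Nat.le_add_right _ _)
  refine le_add_of_nonneg_of_le zero_le_one ?_
  refine (card_le_card fun u hu => ?_).trans (card_image_le (f := Prod.fst))
  obtain ⟨hu, hux⟩ := mem_filter.1 hu
  obtain ⟨v, hv, hvu⟩ := exists_mem_ne h1 u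
  obtain ⟨hv, hvx⟩ := mem_filter.1 hv
  obtain ⟨d, hd, hdx, hud⟩ := h x u hu v hv hvu.symm hux hvx
  exact mem_image.2 ⟨(u, d), mem_filter.2 ⟨mk_mem_product hu hd, hud, hux, hdx⟩, rfl⟩

end Degenerate

section Probability

variable {Ω V ι : Type*} [Fintype Ω]

open Classical in
/-- The probability of the event `A` under the distribution `p`; probability distributions on a
finite type are encoded as members of `stdSimplex`. -/
noncomputable def prob (p : Ω → ℝ) (A : Ω → Prop) : ℝ :=
  ∑ y with A y, p y

/-- The distribution of a family of independent samples from `p` indexed by `ι`. -/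
def iid [Fintype ι] (p : V → ℝ) (x : ι → V) : ℝ :=
  ∏ i, p (x i)

variable {p : Ω → ℝ} {A B : Ω → Prop}

open Classical in
lemma prob_eq_sum_mul_ite (p : Ω → ℝ) (A : Ω → Prop) :
    prob p A = ∑ y, p y * if A y then 1 else 0 := by
  simp only [mul_ite, mul_one, mul_zero]
  exact sum_filter _ _

lemma prob_nonneg (hp : p ∈ stdSimplex ℝ Ω) (A : Ω → Prop) : 0 ≤ prob p A :=
  sum_nonneg fun y _ => hp.1 y

lemma prob_mono (hp : p ∈ stdSimplex ℝ Ω) (h : ∀ y, A y → B y) : prob p A ≤ prob p B := by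
  simp only [prob_eq_sum_mul_ite]
  refine sum_le_sum fun y _ => mul_le_mul_of_nonneg_left ?_ (hp.1 y)
  split_ifs with hA hB <;> first | exact absurd (h y hA) hB | norm_num

lemma prob_or_le (hp : p ∈ stdSimplex ℝ Ω) :
    prob p (fun y => A y ∨ B y) ≤ prob p A + prob p B := by
  classical
  simp only [prob, filter_or]
  rw [← sum_union_inter]
  exact le_add_of_nonneg_right (sum_nonneg fun y _ => hp.1 y)

lemma prob_true (hp : p ∈ stdSimplex ℝ Ω) : prob p (fun _ => True) = 1 := by
  rw [prob, filter_true, hp.2]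

lemma prob_not (hp : p ∈ stdSimplex ℝ Ω) (A : Ω → Prop) :
    prob p (fun y => ¬ A y) = 1 - prob p A := by
  rw [eq_sub_iff_add_eq', ← hp.2, prob_eq_sum_mul_ite, prob_eq_sum_mul_ite, ← sum_add_distrib]
  refine sum_congr rfl fun y _ => ?_
  by_cases h : A y <;> simp [h]

lemma prob_eq_self (p : Ω → ℝ) (y : Ω) : prob p (· = y) = p y := by
  classical
  rw [prob, filter_eq' univ y, if_pos (mem_univ y), sum_singleton]

open Classical in
lemma sum_prob_eq_sum_mul_card (p : Ω → ℝ) (s : Finset ι) (E : ι → Ω → Prop) :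
    ∑ i ∈ s, prob p (E i) = ∑ y, p y * #{i ∈ s | E i y} := by
  simp only [prob_eq_sum_mul_ite, card_filter, Nat.cast_sum, Nat.cast_ite, Nat.cast_one,
    Nat.cast_zero, mul_sum]
  exact sum_comm

open Classical in
lemma sum_prob_le_of_card_le (hp : p ∈ stdSimplex ℝ Ω) (s : Finset ι) (E : ι → Ω → Prop) {c : ℝ}
    (h : ∀ y, (#{i ∈ s | E i y} : ℝ) ≤ c) : ∑ i ∈ s, prob p (E i) ≤ c := by
  rw [sum_prob_eq_sum_mul_card]
  calc ∑ y, p y * (#{i ∈ s | E i y} : ℝ) ≤ ∑ y, p y * c :=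
        sum_le_sum fun y _ => mul_le_mul_of_nonneg_left (h y) (hp.1 y)
    _ = c := by rw [← sum_mul, hp.2, one_mul]

lemma sum_mul_le_add_mul_prob (hp : p ∈ stdSimplex ℝ Ω) {X : Ω → ℝ} {k m : ℝ} (hk : 0 ≤ k)
    (hX : ∀ y, X y ≤ m) : ∑ y, p y * X y ≤ k + m * prob p (fun y => k ≤ X y) := by
  classical
  calc ∑ y, p y * X y ≤ ∑ y, (p y * k + m * (p y * if k ≤ X y then 1 else 0)) := by
        refine sum_le_sum fun y _ => ?_
        split_ifs with h
        · nlinarith [hp.1 y, hX y]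
        · nlinarith [hp.1 y]
    _ = k + m * prob p (fun y => k ≤ X y) := by
        rw [sum_add_distrib, ← sum_mul, hp.2, one_mul, ← mul_sum, prob_eq_sum_mul_ite]

-- Average over `σ` the identity `prob p B = prob p (B ∘ τ σ)`.
open Classical in
lemma prob_le_of_forall_card_le {S : Type*} [Fintype S] [Nonempty S] (hp : p ∈ stdSimplex ℝ Ω)
    (τ : S → Equiv.Perm Ω) (hτ : ∀ σ y, p (τ σ y) = p y) {c : ℝ}
    (hB : ∀ y, (#{σ | B (τ σ y)} : ℝ) ≤ c * Fintype.card S) : prob p B ≤ c := by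
  have hinv : ∀ σ, prob p (fun y => B (τ σ y)) = prob p B := fun σ => by
    rw [prob_eq_sum_mul_ite, prob_eq_sum_mul_ite,
      ← Equiv.sum_comp (τ σ) fun y => p y * if B y then 1 else 0]
    simp only [hτ]
  have h := sum_prob_le_of_card_le hp univ (fun σ y => B (τ σ y)) hB
  simp only [hinv, sum_const, card_univ, nsmul_eq_mul] at h
  rw [mul_comm] at h
  exact le_of_mul_le_mul_right h (Nat.cast_pos.2 Fintype.card_pos)

end Probability

section IndependentSamples

variable {V ι : Type*} [Fintype ι]

lemma iid_comp_perm (p : V → ℝ) (e : Equiv.Perm ι) (x : ι → V) : iid p (x ∘ e) = iid p x :=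
  Equiv.prod_comp e fun i => p (x i)

variable [Fintype V] {p : V → ℝ}

lemma prob_iid_forall [DecidableEq ι] (p : V → ℝ) (A : ι → V → Prop) :
    prob (iid p) (fun x : ι → V => ∀ i, A i (x i)) = ∏ i, prob p (A i) := by
  classical
  simp only [prob_eq_sum_mul_ite]
  rw [Fintype.prod_sum]
  refine sum_congr rfl fun x _ => ?_
  rw [prod_mul_distrib, prod_ite_zero, prod_const_one]
  simp only [mem_univ, true_implies, iid]
  congr

lemma iid_mem_stdSimplex [DecidableEq ι] (hp : p ∈ stdSimplex ℝ V) :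
    (iid p : (ι → V) → ℝ) ∈ stdSimplex ℝ (ι → V) := by
  refine ⟨fun x => prod_nonneg fun i _ => hp.1 _, ?_⟩
  rw [show ∑ x : ι → V, iid p x = ∏ _i : ι, ∑ v, p v from (Fintype.prod_sum _).symm]
  simp only [hp.2, prod_const_one]

lemma prob_iid_apply [DecidableEq ι] (hp : p ∈ stdSimplex ℝ V) (i : ι) (A : V → Prop) :
    prob (iid p) (fun x : ι → V => A (x i)) = prob p A := by
  have h := prob_iid_forall p fun j v => j = i → A v
  simp only [forall_eq] at h
  rw [h, prod_eq_single i (fun j _ hj => by simp only [hj, false_implies, prob_true hp])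
    fun hi => absurd (mem_univ i) hi]
  simp only [true_implies]

open Classical in
lemma one_div_le_prob_iid_card [DecidableEq ι] {Q k : ℕ} (hQ : 0 < Q) (hk : 0 < k)
    (hcard : Fintype.card ι = 2 * Q * k) (hp : p ∈ stdSimplex ℝ V) (A : V → Prop)
    (hA : 1 / (Q : ℝ) ≤ prob p A) :
    1 / (2 * Q : ℝ) ≤ prob (iid p) (fun x : ι → V => k ≤ #{i | A (x i)}) := by
  have hmean : ∑ x : ι → V, iid p x * (#{i | A (x i)} : ℝ) = 2 * Q * k * prob p A := by
    rw [← sum_prob_eq_sum_mul_card]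
    simp only [prob_iid_apply hp, sum_const, card_univ, hcard, nsmul_eq_mul]
    push_cast
    rfl
  have hmarkov := sum_mul_le_add_mul_prob (iid_mem_stdSimplex (ι := ι) hp)
    (X := fun x => (#{i | A (x i)} : ℝ)) (m := 2 * Q * k) (Nat.cast_nonneg k) fun x => by
      exact_mod_cast (card_le_univ _).trans_eq hcard
  simp only [Nat.cast_le] at hmarkov
  rw [hmean] at hmarkov
  have hQ' : (0 : ℝ) < Q := Nat.cast_pos.2 hQ
  have hk' : (0 : ℝ) < k := Nat.cast_pos.2 hk
  rw [div_le_iff₀ hQ'] at hA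
  rw [div_le_iff₀ (by positivity)]
  nlinarith

end IndependentSamples

section Traces

variable {V W α : Type*} [Fintype α] [DecidableEq α]

lemma card_le_of_vcDim_le {𝒜 : Finset (Finset α)} {d : ℕ} (h : 𝒜.vcDim ≤ d) :
    #𝒜 ≤ (d + 1) * (Fintype.card α + 1) ^ d :=
  calc #𝒜 ≤ ∑ k ∈ Iic 𝒜.vcDim, (Fintype.card α).choose k :=
        (card_le_card_shatterer 𝒜).trans card_shatterer_le_sum_vcDim
    _ ≤ ∑ k ∈ Iic d, (Fintype.card α).choose k := sum_le_sum_of_subset (Iic_subset_Iic.2 h)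
    _ ≤ ∑ k ∈ Iic d, (Fintype.card α + 1) ^ d := sum_le_sum fun k hk =>
        (Nat.choose_le_pow _ _).trans ((Nat.pow_le_pow_left (Nat.le_succ _) _).trans
          (Nat.pow_le_pow_right (Nat.succ_pos _) (mem_Iic.1 hk)))
    _ = (d + 1) * (Fintype.card α + 1) ^ d := by rw [sum_const, Nat.card_Iic, smul_eq_mul]

variable [Fintype V] {R : V → W → Prop} {pt : α → W}

open Classical in
/-- The traces of the sets `{x | R v x}` on a family of points. -/
noncomputable def traces (R : V → W → Prop) (pt : α → W) : Finset (Finset α) :=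
  univ.image fun v => ({a | R v (pt a)} : Finset α)

lemma exists_forall_iff_mem_of_shatters {s t : Finset α} (hs : (traces R pt).Shatters s)
    (ht : t ⊆ s) : ∃ v, ∀ a ∈ s, R v (pt a) ↔ a ∈ t := by
  obtain ⟨u, hu, hsu⟩ := hs ht
  obtain ⟨v, -, rfl⟩ := mem_image.1 hu
  refine ⟨v, fun a ha => ?_⟩
  simp only [← hsu, mem_inter, ha, mem_filter, mem_univ, true_and]

lemma injOn_of_shatters {s : Finset α} (hs : (traces R pt).Shatters s) : Set.InjOn pt s := by
  intro a ha b hb hab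
  obtain ⟨v, hv⟩ := exists_forall_iff_mem_of_shatters hs (singleton_subset_iff.2 ha)
  have hva := (hv a ha).2 (mem_singleton_self a)
  rw [hab, hv b hb, mem_singleton] at hva
  exact hva.symm

open Classical in
-- For any two points `a`, `b` of a shattered set, some `{x | R v x}` contains no other point of the
-- set, so that `a` and `b` are adjacent in every support.
lemma vcDim_traces_le {D : ℕ} (hR : HasSparseSupports D (flip R)) (pt : α → W) :
    (traces R pt).vcDim ≤ D + 1 := by
  refine Finset.sup_le fun s hs => ?_
  rw [mem_shatterer] at hs
  rcases s.eq_empty_or_nonempty with rfl | hne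
  · exact Nat.zero_le _
  obtain ⟨E, hdegen, hsupp⟩ := hR (s.image pt)
  obtain ⟨u, hu, hdeg⟩ := hdegen _ subset_rfl (hne.image pt)
  obtain ⟨a, ha, rfl⟩ := mem_image.1 hu
  have hadj : ∀ b ∈ s, b ≠ a → E.Adj (pt a) (pt b) := by
    intro b hb hba
    obtain ⟨v, hv⟩ := exists_forall_iff_mem_of_shatters (t := {a, b}) hs
      (insert_subset ha (singleton_subset_iff.2 hb))
    obtain ⟨d, hd, hvd, had⟩ := hsupp v (pt a) (mem_image_of_mem _ ha) (pt b)
      (mem_image_of_mem _ hb) ((injOn_of_shatters hs).ne ha hb hba.symm)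
      ((hv a ha).2 (by simp)) ((hv b hb).2 (by simp))
    obtain ⟨e, he, rfl⟩ := mem_image.1 hd
    rcases mem_insert.1 ((hv e he).1 hvd) with rfl | heb
    · exact absurd had E.irrefl
    · rwa [mem_singleton.1 heb] at had
  have hsub : (s.erase a).image pt ⊆ {v ∈ s.image pt | E.Adj (pt a) v} := by
    intro y hy
    obtain ⟨b, hb, rfl⟩ := mem_image.1 hy
    obtain ⟨hba, hb⟩ := mem_erase.1 hb
    exact mem_filter.2 ⟨mem_image_of_mem _ hb, hadj b hb hba⟩
  have hcard := (card_le_card hsub).trans hdeg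
  rw [card_image_of_injOn ((injOn_of_shatters hs).mono (coe_subset.2 (erase_subset a s))),
    card_erase_of_mem ha] at hcard
  lia

lemma card_traces_le {D : ℕ} (hR : HasSparseSupports D (flip R)) (pt : α → W) :
    #(traces R pt) ≤ (D + 2) * (Fintype.card α + 1) ^ (D + 1) :=
  card_le_of_vcDim_le (vcDim_traces_le hR pt)

end Traces

section DoubleSampling

variable {V W ι : Type*}

/-- The permutation of the two halves of a double sample that exchanges the two `i`-th samples if
`σ i` is true. -/
def swapHalves (σ : ι → Bool) : Equiv.Perm (ι × Bool) :=
  Equiv.prodShear (Equiv.refl ι) fun i => bif σ i then Equiv.boolNot else Equiv.refl Bool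

lemma swapHalves_false (σ : ι → Bool) (i : ι) : swapHalves σ (i, false) = (i, σ i) := by
  cases h : σ i <;> simp [swapHalves, h]

lemma swapHalves_true (σ : ι → Bool) (i : ι) : swapHalves σ (i, true) = (i, !σ i) := by
  cases h : σ i <;> simp [swapHalves, h]

variable [Fintype ι] [DecidableEq ι]

-- A choice `σ` that is counted agrees with any other one on the at least `k` indices `i` for which
-- the latter puts `(i, true)` or `(i, false)` from `A` in the second half.
lemma card_choices_mul_two_pow_le (k : ℕ) (A : Finset (ι × Bool)) :
    #{σ : ι → Bool | (∀ i, (i, σ i) ∉ A) ∧ k ≤ #{i | (i, !σ i) ∈ A}} * 2 ^ k ≤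
      2 ^ Fintype.card ι := by
  set S : Finset (ι → Bool) := {σ | (∀ i, (i, σ i) ∉ A) ∧ k ≤ #{i | (i, !σ i) ∈ A}}
  rcases S.eq_empty_or_nonempty with hemp | ⟨σ₀, hσ₀⟩
  · rw [hemp, card_empty, zero_mul]
    exact Nat.zero_le _
  set J : Finset ι := {i | (i, !σ₀ i) ∈ A}
  have hkJ : k ≤ #J := (mem_filter.1 hσ₀).2.2
  have hagree : ∀ σ ∈ S, ∀ i ∈ J, σ i = σ₀ i := by
    intro σ hσ i hi
    by_contra hne
    have hσi : σ i = !σ₀ i := Bool.eq_not_iff.2 hne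
    exact (mem_filter.1 hσ).2.1 i (hσi ▸ (mem_filter.1 hi).2)
  have hcard : #S ≤ 2 ^ #Jᶜ := by
    have hinj : #S ≤ #(univ : Finset (↥(Jᶜ) → Bool)) := by
      refine card_le_card_of_injOn (fun σ j => σ j) (fun _ _ => mem_univ _) ?_
      intro σ hσ τ hτ h
      funext i
      by_cases hi : i ∈ J
      · rw [hagree σ hσ i hi, hagree τ hτ i hi]
      · exact congrFun h ⟨i, mem_compl.2 hi⟩
    simpa only [card_univ, Fintype.card_fun, Fintype.card_coe, Fintype.card_bool] using hinj
  calc #S * 2 ^ k ≤ 2 ^ #Jᶜ * 2 ^ #J :=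
        Nat.mul_le_mul hcard (Nat.pow_le_pow_right two_pos hkJ)
    _ = 2 ^ Fintype.card ι := by rw [← pow_add, card_compl_add_card]

open Classical in
/-- The bad event of the double sampling argument: of the two samples `z (·, false)` and
`z (·, true)`, the first misses some set `{x | R v x}` that the second hits at least `k` times. -/
def IsBadSample (R : V → W → Prop) (k : ℕ) (z : ι × Bool → W) : Prop :=
  ∃ v, (∀ i, ¬ R v (z (i, false))) ∧ k ≤ #{i | R v (z (i, true))}

open Classical in
lemma card_isBadSample_swapHalves_mul_le [Fintype V] (R : V → W → Prop) (k : ℕ) (z : ι × Bool → W) :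
    #{σ | IsBadSample R k (z ∘ swapHalves σ)} * 2 ^ k ≤ #(traces R z) * 2 ^ Fintype.card ι := by
  have hsub : ({σ | IsBadSample R k (z ∘ swapHalves σ)} : Finset (ι → Bool)) ⊆
      (traces R z).biUnion fun A =>
        {σ : ι → Bool | (∀ i, (i, σ i) ∉ A) ∧ k ≤ #{i | (i, !σ i) ∈ A}} := by
    intro σ hσ
    obtain ⟨v, hmiss, hhit⟩ := (mem_filter.1 hσ).2
    simp only [Function.comp_apply, swapHalves_false, swapHalves_true] at hmiss hhit
    refine mem_biUnion.2 ⟨_, mem_image_of_mem _ (mem_univ v), ?_⟩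
    simpa only [mem_filter, mem_univ, true_and] using ⟨hmiss, hhit⟩
  calc _ ≤ (∑ A ∈ traces R z,
          #{σ : ι → Bool | (∀ i, (i, σ i) ∉ A) ∧ k ≤ #{i | (i, !σ i) ∈ A}}) * 2 ^ k :=
        Nat.mul_le_mul_right _ ((card_le_card hsub).trans card_biUnion_le)
    _ ≤ ∑ A ∈ traces R z, 2 ^ Fintype.card ι := by
        rw [sum_mul]
        exact sum_le_sum fun A _ => card_choices_mul_two_pow_le k A
    _ = #(traces R z) * 2 ^ Fintype.card ι := by rw [sum_const, smul_eq_mul]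

variable [Fintype W] {p : W → ℝ}

lemma prob_isBadSample_le [Fintype V] (hp : p ∈ stdSimplex ℝ W) {R : V → W → Prop} (k : ℕ)
    {t : ℕ} (ht : ∀ pt : ι × Bool → W, #(traces R pt) ≤ t) :
    prob (iid p) (IsBadSample (ι := ι) R k) ≤ t / 2 ^ k := by
  classical
  refine prob_le_of_forall_card_le (iid_mem_stdSimplex hp)
    (fun σ => (swapHalves σ).symm.arrowCongr (Equiv.refl W))
    (fun σ => iid_comp_perm p (swapHalves σ)) fun z => ?_
  rw [div_mul_eq_mul_div, le_div_iff₀ (by positivity), Fintype.card_fun, Fintype.card_bool]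
  exact_mod_cast (card_isBadSample_swapHalves_mul_le R k z).trans (Nat.mul_le_mul_right _ (ht z))

/-- The double sample whose halves are two given samples. -/
def joinHalves : (ι → W) × (ι → W) ≃ (ι × Bool → W) where
  toFun z a := bif a.2 then z.2 a.1 else z.1 a.1
  invFun z := (fun i => z (i, false), fun i => z (i, true))
  left_inv _ := rfl
  right_inv z := by ext ⟨i, b⟩; cases b <;> rfl

lemma prob_iid_prod_bool (p : W → ℝ) (A : (ι × Bool → W) → Prop) :
    prob (iid p) A = ∑ x, iid p x * prob (iid p) fun y => A (joinHalves (x, y)) := by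
  simp only [prob_eq_sum_mul_ite]
  rw [← Equiv.sum_comp joinHalves, Fintype.sum_prod_type]
  refine sum_congr rfl fun x _ => ?_
  rw [mul_sum]
  refine sum_congr rfl fun y _ => ?_
  rw [← mul_assoc]
  congr 1
  simp only [iid, Fintype.prod_prod_type, Fintype.prod_bool, prod_mul_distrib, joinHalves,
    Equiv.coe_fn_mk, cond_true, cond_false, mul_comm]

open Classical in
lemma one_div_le_prob_isBadSample {Q k : ℕ} (hQ : 0 < Q) (hk : 0 < k)
    (hcard : Fintype.card ι = 2 * Q * k) (hp : p ∈ stdSimplex ℝ W) {R : V → W → Prop}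
    (h : ∀ x : ι → W, ∃ v, 1 / (Q : ℝ) ≤ prob p (R v) ∧ ∀ i, ¬ R v (x i)) :
    1 / (2 * Q : ℝ) ≤ prob (iid p) (IsBadSample (ι := ι) R k) := by
  have hiid := iid_mem_stdSimplex (ι := ι) hp
  rw [prob_iid_prod_bool]
  calc 1 / (2 * Q : ℝ) = ∑ x : ι → W, iid p x * (1 / (2 * Q)) := by rw [← sum_mul, hiid.2, one_mul]
    _ ≤ _ := by
        refine sum_le_sum fun x _ => mul_le_mul_of_nonneg_left ?_ (hiid.1 x)
        obtain ⟨v, hv, hmiss⟩ := h x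
        have hbad : ∀ y : ι → W, k ≤ #{i | R v (y i)} → IsBadSample R k (joinHalves (x, y)) :=
          fun y hy => ⟨v, hmiss, hy⟩
        exact (one_div_le_prob_iid_card hQ hk hcard hp (R v) hv).trans (prob_mono hiid hbad)

end DoubleSampling

section Nets

variable {V W : Type*} [Fintype V] [Fintype W] {p : W → ℝ}

lemma exists_mul_pow_lt_two_pow (a b d : ℕ) : ∃ k, 0 < k ∧ a * (b * k + 1) ^ d < 2 ^ k := by
  have h : Filter.Tendsto (fun k : ℕ => (k : ℝ) ^ d / (2 : ℝ) ^ k) Filter.atTop (nhds 0) :=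
    tendsto_pow_const_div_const_pow_of_one_lt d one_lt_two
  have hc : (0 : ℝ) < 1 / (a * (b + 1) ^ d + 1) := by positivity
  obtain ⟨k, hk, hpos⟩ :=
    ((h.eventually (gt_mem_nhds hc)).and (Filter.eventually_gt_atTop 0)).exists
  refine ⟨k, hpos, ?_⟩
  rw [div_lt_div_iff₀ (by positivity) (by positivity), one_mul] at hk
  have hk' : k ^ d * (a * (b + 1) ^ d + 1) < 2 ^ k := by exact_mod_cast hk
  calc a * (b * k + 1) ^ d ≤ a * ((b + 1) * k) ^ d := by gcongr; nlinarith
    _ = k ^ d * (a * (b + 1) ^ d) := by rw [mul_pow]; ring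
    _ ≤ k ^ d * (a * (b + 1) ^ d + 1) := by gcongr; omega
    _ < 2 ^ k := hk'

open Classical in
lemma exists_net_of_card_traces_le {Q k t : ℕ} (hQ : 0 < Q) (hk : 0 < k)
    (hp : p ∈ stdSimplex ℝ W) {R : V → W → Prop}
    (ht : ∀ pt : Fin (2 * Q * k) × Bool → W, #(traces R pt) ≤ t) (htk : 2 * Q * t < 2 ^ k) :
    ∃ T : Finset W, #T ≤ 2 * Q * k ∧ ∀ v, 1 / (Q : ℝ) ≤ prob p (R v) → ∃ x ∈ T, R v x := by
  by_contra! h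
  have hlow := one_div_le_prob_isBadSample (R := R) hQ hk (Fintype.card_fin _) hp fun x => by
    obtain ⟨v, hv, hmiss⟩ := h (univ.image x) (card_image_le.trans_eq (card_fin _))
    exact ⟨v, hv, fun i => hmiss _ (mem_image_of_mem x (mem_univ i))⟩
  have hle := hlow.trans (prob_isBadSample_le hp k ht)
  rw [div_le_div_iff₀ (by positivity) (by positivity), one_mul] at hle
  exact absurd (by exact_mod_cast (mul_comm (t : ℝ) _ ▸ hle : (2 : ℝ) ^ k ≤ 2 * Q * t)) htk.not_ge

lemma exists_net (D Q : ℕ) (hQ : 0 < Q) :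
    ∃ m : ℕ, ∀ {V : Type u} {W : Type v} [Fintype V] [Fintype W] {R : V → W → Prop} {p : W → ℝ},
      HasSparseSupports D (flip R) → p ∈ stdSimplex ℝ W →
      ∃ T : Finset W, #T ≤ m ∧ ∀ v, 1 / (Q : ℝ) ≤ prob p (R v) → ∃ x ∈ T, R v x := by
  obtain ⟨k, hk, hlt⟩ := exists_mul_pow_lt_two_pow (2 * Q * (D + 2)) (4 * Q) (D + 1)
  refine ⟨2 * Q * k, fun hR hp => ?_⟩
  refine exists_net_of_card_traces_le hQ hk hp (fun pt => card_traces_le hR pt) ?_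
  rw [Fintype.card_prod, Fintype.card_fin, Fintype.card_bool]
  convert hlt using 1
  ring

end Nets

section Greedy

variable {V α : Type*} [LinearOrder α] {Q : V → V → Prop}

open Classical in
-- Go through `S` in increasing order of `g`.
lemma exists_pairwise_not_and_forall_exists_le (hQ : ∀ u v, Q u v → Q v u) (g : V → α)
    (S : Finset V) : ∃ M ⊆ S, (M : Set V).Pairwise (fun u v => ¬ Q u v) ∧
      ∀ v ∈ S, ∃ u ∈ M, g u ≤ g v ∧ (u = v ∨ Q u v) := by
  induction S using Finset.induction_on_max_value g with
  | empty => exact ⟨∅, subset_rfl, by simp, by simp⟩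
  | insert v S _ hmax ih =>
    obtain ⟨M, hMS, hM, hcov⟩ := ih
    by_cases h : ∃ u ∈ M, Q u v
    · obtain ⟨u, hu, huv⟩ := h
      exact ⟨M, hMS.trans (subset_insert _ _), hM,
        forall_mem_insert _ _ _ |>.2 ⟨⟨u, hu, hmax u (hMS hu), Or.inr huv⟩, hcov⟩⟩
    · push Not at h
      refine ⟨insert v M, insert_subset_insert _ hMS, ?_, forall_mem_insert _ _ _ |>.2 ⟨?_, ?_⟩⟩
      · rw [coe_insert]
        exact hM.insert fun u hu _ => ⟨fun hvu => h u hu (hQ v u hvu), h u hu⟩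
      · exact ⟨v, mem_insert_self _ _, le_rfl, Or.inl rfl⟩
      · exact fun x hx => (hcov x hx).imp fun u hu => ⟨mem_insert_of_mem hu.1, hu.2⟩

end Greedy

section Rounding

variable {W : Type*} [Fintype W] {w : W → ℝ}

open Classical in
/-- The distribution `w` conditioned on the event `P`, which is the zero function if `P` has
probability zero. -/
noncomputable def condDist (w : W → ℝ) (P : W → Prop) (x : W) : ℝ :=
  if P x then w x / prob w P else 0

lemma prob_condDist (w : W → ℝ) (P A : W → Prop) :
    prob (condDist w P) A = prob w (fun x => P x ∧ A x) / prob w P := by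
  classical
  simp only [prob, condDist]
  rw [← sum_filter, filter_filter, ← sum_div]
  simp only [and_comm]

lemma condDist_mem_stdSimplex (hw : w ∈ stdSimplex ℝ W) {P : W → Prop} (hP : 0 < prob w P) :
    condDist w P ∈ stdSimplex ℝ W := by
  classical
  refine ⟨fun x => ?_, ?_⟩
  · unfold condDist
    split_ifs
    exacts [div_nonneg (hw.1 x) hP.le, le_rfl]
  · simp only [condDist]
    rw [← sum_filter, ← sum_div]
    exact div_self hP.ne'

-- The sum counts every point of `W` once for each member of `M` containing it, hence at most once
-- plus the number of edges of the support between such members.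
open Classical in
lemma HasSparseSupports.sum_prob_le_two {V : Type u} {W : Type v} [Fintype W] {D : ℕ}
    {R : V → W → Prop} (hR : HasSparseSupports D R) {w : W → ℝ} (hw : w ∈ stdSimplex ℝ W)
    {M : Finset V} (hM : (M : Set V).Pairwise fun u v => prob w (fun x => R u x ∧ R v x) ≤
      1 / (4 * D + 4 : ℝ) * min (prob w (R u)) (prob w (R v))) :
    ∑ u ∈ M, prob w (R u) ≤ 2 := by
  obtain ⟨E, hdegen, hsupp⟩ := hR M
  have hdepth : ∀ x, (#{u ∈ M | R u x} : ℝ) ≤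
      1 + #{a ∈ {a ∈ M ×ˢ M | E.Adj a.1 a.2} | R a.1 x ∧ R a.2 x} := fun x => by
    rw [filter_filter]
    exact_mod_cast hsupp.card_filter_le x
  have hoverlap : ∑ a ∈ M ×ˢ M with E.Adj a.1 a.2, prob w (fun x => R a.1 x ∧ R a.2 x) ≤
      1 / (4 * D + 4 : ℝ) * ∑ a ∈ M ×ˢ M with E.Adj a.1 a.2,
        min (prob w (R a.1)) (prob w (R a.2)) := by
    rw [mul_sum]
    refine sum_le_sum fun a ha => ?_
    obtain ⟨ha, hadj⟩ := mem_filter.1 ha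
    exact hM (mem_product.1 ha).1 (mem_product.1 ha).2 hadj.ne
  have hmin := hdegen.sum_min_le fun u => prob_nonneg hw (R u)
  have hle : ∑ u ∈ M, prob w (R u) ≤
      1 + 1 / (4 * D + 4 : ℝ) * (2 * D * ∑ u ∈ M, prob w (R u)) :=
    calc ∑ u ∈ M, prob w (R u) = ∑ x, w x * #{u ∈ M | R u x} := sum_prob_eq_sum_mul_card w M R
      _ ≤ ∑ x, w x * (1 + #{a ∈ {a ∈ M ×ˢ M | E.Adj a.1 a.2} | R a.1 x ∧ R a.2 x}) :=
          sum_le_sum fun x _ => mul_le_mul_of_nonneg_left (hdepth x) (hw.1 x)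
      _ = 1 + ∑ a ∈ M ×ˢ M with E.Adj a.1 a.2, prob w (fun x => R a.1 x ∧ R a.2 x) := by
          rw [sum_prob_eq_sum_mul_card]
          simp only [mul_add, mul_one, sum_add_distrib, hw.2]
          congr!
      _ ≤ _ := add_le_add_right (hoverlap.trans (by gcongr)) 1
  have hnonneg : 0 ≤ ∑ u ∈ M, prob w (R u) := sum_nonneg fun u _ => prob_nonneg hw (R u)
  rw [one_div_mul_eq_div, ← sub_le_iff_le_add', le_div_iff₀ (by positivity)] at hle
  nlinarith

open Classical in
-- Choose greedily, by increasing weight, a maximal family of members of small pairwise overlap.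
-- Every other member has large overlap with a chosen one, and so is hit by a net inside the latter.
lemma exists_transversal_of_le_prob (D : ℕ) :
    ∃ c : ℕ, ∀ {V : Type u} {W : Type v} [Fintype V] [Fintype W] {R : V → W → Prop},
      HasSparseSupports D R → HasSparseSupports D (flip R) → ∀ {w : W → ℝ}, w ∈ stdSimplex ℝ W →
      ∀ {N : ℕ}, 0 < N → (∀ v, 1 / (N : ℝ) ≤ prob w (R v)) →
        ∃ T : Finset W, #T ≤ c * N ∧ ∀ v, ∃ x ∈ T, R v x := by
  obtain ⟨m, hm⟩ := exists_net D (4 * D + 4) (Nat.succ_pos _)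
  push_cast at hm
  refine ⟨2 * m, fun {V W} _ _ {R} hR hR' {w} hw {N} hN hdom => ?_⟩
  have hpos : ∀ v, 0 < prob w (R v) := fun v => lt_of_lt_of_le (by positivity) (hdom v)
  obtain ⟨M, -, hM, hcov⟩ := exists_pairwise_not_and_forall_exists_le
    (Q := fun u v => 1 / (4 * D + 4 : ℝ) * min (prob w (R u)) (prob w (R v)) <
      prob w (fun x => R u x ∧ R v x))
    (fun u v h => by simpa only [min_comm, and_comm] using h) (fun v => prob w (R v)) univ
  have hMcard : #M ≤ 2 * N := by
    have h : #M • (1 / (N : ℝ)) ≤ 2 :=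
      (card_nsmul_le_sum _ _ _ fun u _ => hdom u).trans
        (hR.sum_prob_le_two hw (hM.imp fun _ _ => le_of_not_gt))
    rw [nsmul_eq_mul, mul_one_div, div_le_iff₀ (by positivity)] at h
    exact_mod_cast h
  choose T hT hhit using fun u => hm hR' (condDist_mem_stdSimplex hw (hpos u))
  refine ⟨M.biUnion T, ?_, fun v => ?_⟩
  · calc #(M.biUnion T) ≤ #M * m := card_biUnion_le_card_mul M T m fun u _ => hT u
      _ ≤ 2 * N * m := Nat.mul_le_mul_right _ hMcard
      _ = 2 * m * N := by ring
  · obtain ⟨u, hu, hle, huv⟩ := hcov v (mem_univ v)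
    have hbig : 1 / (4 * D + 4 : ℝ) * prob w (R u) ≤ prob w (fun x => R u x ∧ R v x) := by
      rcases huv with rfl | huv
      · simp only [and_self]
        refine mul_le_of_le_one_left (hpos u).le ?_
        rw [div_le_one (by positivity)]
        linarith [(Nat.cast_nonneg D : (0 : ℝ) ≤ D)]
      · exact (min_eq_left hle ▸ huv).le
    obtain ⟨x, hx, hvx⟩ := hhit u v (by rwa [prob_condDist, le_div_iff₀ (hpos u)])
    exact ⟨x, mem_biUnion.2 ⟨u, hu, hx⟩, hvx⟩

end Rounding

section Turan

variable {V : Type*} [Fintype V] {p : V → ℝ} {Q : V → V → Prop}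

open Classical in
-- A weighted form of the Caro-Wei bound. With `a u = prob p (Q u)`, the greedy independent set `I`
-- satisfies `∑ v, p v / a v ≤ #I`, and `1 / a ≥ (2 * c - a) / c ^ 2`.
lemma exists_pairwise_not_and_one_le_mul_card (hp : p ∈ stdSimplex ℝ V) (hrefl : ∀ v, Q v v)
    (hsymm : ∀ u v, Q u v → Q v u) {c : ℝ} (hc0 : 0 < c)
    (hc : ∑ u, p u * prob p (Q u) ≤ c) :
    ∃ I : Finset V, (I : Set V).Pairwise (fun u v => ¬ Q u v) ∧ 1 ≤ c * #I := by
  obtain ⟨I, -, hI, hcov⟩ :=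
    exists_pairwise_not_and_forall_exists_le hsymm (fun u => prob p (Q u)) univ
  have hpoint : ∀ v, p v * (2 * c - prob p (Q v)) ≤
      c ^ 2 * ∑ u ∈ I, p v * (if Q u v then 1 else 0) / prob p (Q u) := by
    intro v
    obtain ⟨u, hu, hle, huv⟩ := hcov v (mem_univ v)
    have hQ : Q u v := huv.elim (fun h => h ▸ hrefl u) id
    have hself : p v ≤ prob p (Q u) :=
      (prob_eq_self p v).symm.trans_le (prob_mono hp fun y hy => hy ▸ hQ)
    rcases (hp.1 v).eq_or_lt with h0 | hpos
    · simp only [← h0, zero_mul, zero_div, sum_const_zero, mul_zero, le_rfl]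
    have hterm : p v / prob p (Q u) ≤
        ∑ u ∈ I, p v * (if Q u v then 1 else 0) / prob p (Q u) := by
      refine le_trans (by rw [if_pos hQ, mul_one]) (single_le_sum (f := fun u =>
        p v * (if Q u v then 1 else 0) / prob p (Q u)) (fun w _ => ?_) hu)
      exact div_nonneg (mul_nonneg hpos.le (by split_ifs <;> norm_num)) (prob_nonneg hp _)
    refine le_trans ?_ (mul_le_mul_of_nonneg_left hterm (sq_nonneg c))
    rw [← mul_div_assoc, mul_comm (c ^ 2), mul_div_assoc]
    refine mul_le_mul_of_nonneg_left ?_ hpos.le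
    rw [le_div_iff₀ (hpos.trans_le hself)]
    nlinarith [sq_nonneg (c - prob p (Q u)), hpos.trans_le hself]
  have hsum : c * 1 ≤ c * (c * #I) :=
    calc c * 1 ≤ ∑ v, p v * (2 * c - prob p (Q v)) := by
          simp only [mul_sub, sum_sub_distrib, ← sum_mul, hp.2]
          linarith
      _ ≤ ∑ v, c ^ 2 * ∑ u ∈ I, p v * (if Q u v then 1 else 0) / prob p (Q u) :=
          sum_le_sum fun v _ => hpoint v
      _ = c ^ 2 * ∑ u ∈ I, prob p (Q u) / prob p (Q u) := by
          rw [← mul_sum, sum_comm]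
          simp only [← sum_div, ← prob_eq_sum_mul_ite]
      _ ≤ c ^ 2 * ∑ u ∈ I, 1 := by
          gcongr
          exact div_self_le_one _
      _ = c * (c * #I) := by rw [sum_const, nsmul_eq_mul]; ring
  exact ⟨I, hI, le_of_mul_le_mul_left hsum hc0⟩

end Turan

section PrivatePairs

variable {V W ι : Type*}

/-- Two members of the family `{x | R u x}` meet. -/
def Meets (R : V → W → Prop) (u v : V) : Prop :=
  ∃ z, R u z ∧ R v z

/-- Two indices `a.1`, `a.2` of a sample form a private pair if the sampled members of the family
`{x | R u x}` are different and share a point that lies in no other member of the sample. -/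
def IsPrivatePair (R : V → W → Prop) (x : ι → V) (a : ι × ι) : Prop :=
  x a.1 ≠ x a.2 ∧ ∃ z, R (x a.1) z ∧ R (x a.2) z ∧ ∀ k, k ≠ a.1 → k ≠ a.2 → ¬ R (x k) z

lemma IsPrivatePair.eq_and_eq {R : V → W → Prop} {x : ι → V} {i j i' j' : ι}
    (h : IsPrivatePair R x (i, j)) (hi : x i' = x i) (hj : x j' = x j) : i' = i ∧ j' = j := by
  obtain ⟨hne, z, hiz, hjz, hz⟩ := h
  have hi' : i' = i ∨ i' = j := by
    by_contra! h
    exact hz i' h.1 h.2 (hi ▸ hiz)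
  have hj' : j' = i ∨ j' = j := by
    by_contra! h
    exact hz j' h.1 h.2 (hj ▸ hjz)
  refine ⟨hi'.resolve_right ?_, hj'.resolve_left ?_⟩ <;> rintro rfl
  exacts [hne hi.symm, hne hj]

open Classical in
-- A private pair is an edge in every support of the sample, and determined by this edge.
lemma HasSparseSupports.card_isPrivatePair_le [Fintype ι] {V : Type u} {W : Type v} {D : ℕ}
    {R : V → W → Prop} (hR : HasSparseSupports D R) (x : ι → V) :
    #{a | IsPrivatePair R x a} ≤ 2 * D * Fintype.card ι := by
  obtain ⟨E, hdegen, hsupp⟩ := hR (univ.image x)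
  have hmem : ∀ i, x i ∈ univ.image x := fun i => mem_image_of_mem _ (mem_univ i)
  calc #{a | IsPrivatePair R x a} ≤ #{a ∈ univ.image x ×ˢ univ.image x | E.Adj a.1 a.2} := by
        refine card_le_card_of_injOn (fun a => (x a.1, x a.2)) ?_ ?_
        · rintro ⟨i, j⟩ ha
          obtain ⟨hne, z, hiz, hjz, hz⟩ := (mem_filter.1 ha).2
          obtain ⟨d, hd, hdz, hadj⟩ := hsupp z (x i) (hmem i) (x j) (hmem j) hne hiz hjz
          obtain ⟨k, -, rfl⟩ := mem_image.1 hd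
          refine mem_filter.2 ⟨mk_mem_product (hmem i) (hmem j), ?_⟩
          rcases eq_or_ne k i with rfl | hki
          · exact absurd hadj E.irrefl
          rcases eq_or_ne k j with rfl | hkj
          · exact hadj
          · exact absurd hdz (hz k hki hkj)
        · rintro ⟨i, j⟩ ha ⟨i', j'⟩ - h
          obtain ⟨hi, hj⟩ := Prod.mk.inj h
          obtain ⟨rfl, rfl⟩ := (mem_filter.1 ha).2.eq_and_eq hi.symm hj.symm
          rfl
    _ ≤ 2 * D * #(univ.image x) := hdegen.card_adj_le
    _ ≤ 2 * D * Fintype.card ι := Nat.mul_le_mul_left _ card_image_le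

variable [Fintype ι] [DecidableEq ι] [Fintype V] {p : V → ℝ}

lemma prob_iid_eq_and_eq_and_forall (p : V → ℝ) {i j : ι} (hij : i ≠ j) (u v : V)
    (A : V → Prop) :
    prob (iid p) (fun x : ι → V => x i = u ∧ x j = v ∧ ∀ k, k ≠ i → k ≠ j → A (x k)) =
      p u * p v * prob p A ^ (Fintype.card ι - 2) := by
  have h := prob_iid_forall p fun k y =>
    (k = i → y = u) ∧ (k = j → y = v) ∧ (k ≠ i → k ≠ j → A y)
  simp only [forall_and, forall_eq] at h
  have hj : j ∈ univ.erase i := mem_erase.2 ⟨hij.symm, mem_univ j⟩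
  have hcard : #((univ.erase i).erase j) = Fintype.card ι - 2 := by
    rw [card_erase_of_mem hj, card_erase_of_mem (mem_univ i), card_univ, Nat.sub_sub]
  have hrest : ∀ k ∈ (univ.erase i).erase j, prob p (fun y =>
      (k = i → y = u) ∧ (k = j → y = v) ∧ (k ≠ i → k ≠ j → A y)) = prob p A := fun k hk => by
    have hkj := (mem_erase.1 hk).1
    have hki := (mem_erase.1 (mem_erase.1 hk).2).1
    simp [hkj, hki]
  rw [h, ← mul_prod_erase univ _ (mem_univ i), ← mul_prod_erase _ _ hj, prod_congr rfl hrest,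
    prod_const, hcard, ← mul_assoc]
  simp [hij, hij.symm, prob_eq_self]

lemma one_half_le_one_sub_pow {N : ℕ} (hN : 0 < N) : 1 / 2 ≤ (1 - 1 / (2 * N : ℝ)) ^ N := by
  have hN' : (1 : ℝ) ≤ N := Nat.one_le_cast.2 hN
  have h := one_add_mul_le_pow (a := -(1 / (2 * N : ℝ))) (by
    rw [neg_le_neg_iff, div_le_iff₀ (by positivity)]
    linarith) N
  rw [← sub_eq_add_neg] at h
  refine le_trans (le_of_eq ?_) h
  field_simp
  norm_num

lemma sum_prob_fiber {Ω γ : Type*} [Fintype Ω] [Fintype γ] (p : Ω → ℝ) (f : Ω → γ)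
    (A : Ω → Prop) : ∑ c, prob p (fun y => f y = c ∧ A y) = prob p A := by
  classical
  simp only [prob, ← filter_filter, filter_comm (p := fun y => f y = _)]
  exact sum_fiberwise _ f p

-- With probability at least `1 / 2`, no other sample contains a given common point of `u` and `v`.
lemma one_half_mul_le_prob_isPrivatePair {R : V → W → Prop} (hp : p ∈ stdSimplex ℝ V) {N : ℕ}
    (hN : 0 < N) (hcard : Fintype.card ι = N + 2)
    (hlight : ∀ z, prob p (R · z) ≤ 1 / (2 * N : ℝ)) {i j : ι} (hij : i ≠ j) {u v : V}
    (hne : u ≠ v) (hmeets : Meets R u v) :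
    1 / 2 * (p u * p v) ≤
      prob (iid p) (fun x : ι → V => (x i, x j) = (u, v) ∧ IsPrivatePair R x (i, j)) := by
  obtain ⟨z, huz, hvz⟩ := hmeets
  have hN' : (1 : ℝ) ≤ N := Nat.one_le_cast.2 hN
  have hbase : 0 ≤ 1 - 1 / (2 * N : ℝ) := by
    rw [sub_nonneg, div_le_one (by positivity)]
    linarith
  have hmiss : 1 - 1 / (2 * N : ℝ) ≤ prob p (fun y => ¬ R y z) := by
    rw [prob_not hp]
    linarith [hlight z]
  calc 1 / 2 * (p u * p v) ≤ prob p (fun y => ¬ R y z) ^ N * (p u * p v) :=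
        mul_le_mul_of_nonneg_right
          ((one_half_le_one_sub_pow hN).trans (pow_le_pow_left₀ hbase hmiss N))
          (mul_nonneg (hp.1 u) (hp.1 v))
    _ = prob (iid p) (fun x : ι → V => x i = u ∧ x j = v ∧
          ∀ k, k ≠ i → k ≠ j → ¬ R (x k) z) := by
        rw [prob_iid_eq_and_eq_and_forall p hij u v fun y => ¬ R y z, hcard, Nat.add_sub_cancel]
        ring
    _ ≤ _ := by
        refine prob_mono (iid_mem_stdSimplex hp) fun x ⟨hi, hj, hx⟩ =>
          ⟨by rw [hi, hj], ?_, z, ?_, ?_, hx⟩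
        all_goals simpa only [hi, hj]

lemma one_half_mul_sum_le_prob_isPrivatePair {R : V → W → Prop} (hp : p ∈ stdSimplex ℝ V) {N : ℕ}
    (hN : 0 < N) (hcard : Fintype.card ι = N + 2)
    (hlight : ∀ z, prob p (R · z) ≤ 1 / (2 * N : ℝ)) {i j : ι} (hij : i ≠ j) :
    1 / 2 * ∑ u, p u * prob p (fun v => u ≠ v ∧ Meets R u v) ≤
      prob (iid p) (fun x : ι → V => IsPrivatePair R x (i, j)) := by
  classical
  calc _ = ∑ a : V × V,
        1 / 2 * (p a.1 * (p a.2 * if a.1 ≠ a.2 ∧ Meets R a.1 a.2 then 1 else 0)) := by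
        simp only [Fintype.sum_prod_type, prob_eq_sum_mul_ite, mul_sum]
        congr!
    _ ≤ ∑ a : V × V,
        prob (iid p) (fun x : ι → V => (x i, x j) = a ∧ IsPrivatePair R x (i, j)) := by
        refine sum_le_sum fun ⟨u, v⟩ _ => ?_
        split_ifs with h
        · simpa only [mul_one] using
            one_half_mul_le_prob_isPrivatePair hp hN hcard hlight hij h.1 h.2
        · simpa only [mul_zero] using prob_nonneg (iid_mem_stdSimplex hp) _
    _ = _ := sum_prob_fiber _ _ _

end PrivatePairs

section Heavy

open Classical in
-- The sampling argument of Clarkson and Shor: count the private pairs among `N + 2` samples.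
lemma HasSparseSupports.sum_mul_prob_meets_le {V : Type u} {W : Type v} [Fintype V] {D : ℕ}
    {R : V → W → Prop} (hR : HasSparseSupports D R) {p : V → ℝ} (hp : p ∈ stdSimplex ℝ V) {N : ℕ}
    (hN : 0 < N) (hlight : ∀ z, prob p (R · z) ≤ 1 / (2 * N : ℝ)) :
    ∑ u, p u * prob p (fun v => u ≠ v ∧ Meets R u v) ≤ 4 * D / N := by
  set q := ∑ u, p u * prob p (fun v => u ≠ v ∧ Meets R u v)
  have hcard : #(univ.offDiag : Finset (Fin (N + 2) × Fin (N + 2))) = (N + 2) * (N + 1) := by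
    rw [offDiag_card, card_univ, Fintype.card_fin, ← Nat.mul_sub_one]
    rfl
  have hcount : ((N + 2) * (N + 1) : ℝ) * (1 / 2 * q) ≤ 2 * D * (N + 2) :=
    calc ((N + 2) * (N + 1) : ℝ) * (1 / 2 * q)
        = #(univ.offDiag : Finset (Fin (N + 2) × Fin (N + 2))) • (1 / 2 * q) := by
          rw [hcard, nsmul_eq_mul]
          push_cast
          rfl
      _ ≤ ∑ a ∈ univ.offDiag, prob (iid p) fun x : Fin (N + 2) → V => IsPrivatePair R x a :=
          card_nsmul_le_sum _ _ _ fun a ha => one_half_mul_sum_le_prob_isPrivatePair hp hN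
            (Fintype.card_fin _) hlight (mem_offDiag.1 ha).2.2
      _ ≤ 2 * D * (N + 2) := by
          refine sum_prob_le_of_card_le (iid_mem_stdSimplex hp) _ _ fun x => ?_
          have h := (card_le_card (filter_subset_filter (IsPrivatePair R x)
            (subset_univ univ.offDiag))).trans (hR.card_isPrivatePair_le x)
          rw [Fintype.card_fin] at h
          exact_mod_cast h
  have hq : 0 ≤ q := sum_nonneg fun u _ => mul_nonneg (hp.1 u) (prob_nonneg hp _)
  have hN' : (0 : ℝ) < N := Nat.cast_pos.2 hN
  rw [le_div_iff₀ hN']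
  have h : ((N : ℝ) + 2) * ((N + 1) * (1 / 2 * q)) ≤ (N + 2) * (2 * D) := by linarith
  nlinarith [le_of_mul_le_mul_left h (by positivity)]

lemma HasSparseSupports.exists_le_prob {V : Type u} {W : Type v} [Fintype V] {D : ℕ}
    {R : V → W → Prop} (hR : HasSparseSupports D R) (hne : ∀ v, ∃ z, R v z) {ν : ℕ} (hν : 0 < ν)
    (hind : ∀ I : Finset V, (I : Set V).Pairwise (fun u v => ¬ Meets R u v) → #I ≤ ν)
    {p : V → ℝ} (hp : p ∈ stdSimplex ℝ V) :
    ∃ z, 1 / (2 * ((4 * D + 2) * ν : ℕ) : ℝ) ≤ prob p (R · z) := by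
  by_contra! h
  set N := (4 * D + 2) * ν with hN
  have hNpos : 0 < N := Nat.mul_pos (Nat.succ_pos _) hν
  have hN' : (0 : ℝ) < N := Nat.cast_pos.2 hNpos
  have hsingle : ∀ u, p u ≤ 1 / N := by
    intro u
    obtain ⟨z, hz⟩ := hne u
    calc p u = prob p (· = u) := (prob_eq_self p u).symm
      _ ≤ prob p (R · z) := prob_mono hp fun y hy => hy ▸ hz
      _ ≤ 1 / (2 * N : ℝ) := (h z).le
      _ ≤ 1 / N := one_div_le_one_div_of_le hN' (by linarith)
  have hmeets : ∀ u, prob p (Meets R u) ≤ prob p (fun v => u ≠ v ∧ Meets R u v) + 1 / N := by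
    intro u
    calc prob p (Meets R u) ≤ prob p (fun v => (u ≠ v ∧ Meets R u v) ∨ v = u) :=
          prob_mono hp fun v hv => (eq_or_ne v u).elim Or.inr fun hvu => Or.inl ⟨hvu.symm, hv⟩
      _ ≤ prob p (fun v => u ≠ v ∧ Meets R u v) + prob p (· = u) := prob_or_le hp
      _ ≤ _ := add_le_add_right ((prob_eq_self p u).trans_le (hsingle u)) _
  have hmean : ∑ u, p u * prob p (Meets R u) ≤ (4 * D + 1) / N :=
    calc ∑ u, p u * prob p (Meets R u)
        ≤ ∑ u, p u * (prob p (fun v => u ≠ v ∧ Meets R u v) + 1 / N) :=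
          sum_le_sum fun u _ => mul_le_mul_of_nonneg_left (hmeets u) (hp.1 u)
      _ = ∑ u, p u * prob p (fun v => u ≠ v ∧ Meets R u v) + 1 / N := by
          simp only [mul_add, sum_add_distrib, ← sum_mul, hp.2, one_mul]
      _ ≤ 4 * D / N + 1 / N :=
          add_le_add_left (hR.sum_mul_prob_meets_le hp hNpos fun z => (h z).le) _
      _ = (4 * D + 1) / N := (add_div _ _ _).symm
  obtain ⟨I, hI, hcard⟩ := exists_pairwise_not_and_one_le_mul_card hp
    (fun v => (hne v).imp fun z hz => ⟨hz, hz⟩) (fun u v => Exists.imp fun z => And.symm)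
    (by positivity) hmean
  have hIν : (#I : ℝ) ≤ ν := Nat.cast_le.2 (hind I hI)
  have hν' : (1 : ℝ) ≤ ν := Nat.one_le_cast.2 hν
  rw [div_mul_eq_mul_div, le_div_iff₀ hN', hN] at hcard
  push_cast at hcard
  nlinarith [(Nat.cast_nonneg D : (0 : ℝ) ≤ D)]

end Heavy

section Minimax

variable {V W : Type*} [Fintype V] [Fintype W]

lemma exists_forall_vecMul_le_mulVec [Nonempty V] [Nonempty W]
    (M : Matrix V W ℝ) :
    ∃ a ∈ stdSimplex ℝ V, ∃ b ∈ stdSimplex ℝ W, ∀ v x, Matrix.vecMul a M x ≤ M.mulVec b v := by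
  classical
  let f : (V → ℝ) →ₗ[ℝ] (W → ℝ) →ₗ[ℝ] ℝ := Matrix.toLinearMap₂' ℝ M
  obtain ⟨a, ha, b, hb, hsaddle⟩ := Sion.exists_isSaddlePointOn
    (f := fun a b => f a b)
    ⟨_, single_mem_stdSimplex ℝ (Classical.arbitrary V)⟩ (convex_stdSimplex ℝ V)
    (isCompact_stdSimplex ℝ V)
    (fun b _ =>
      (f.flip b).continuous_of_finiteDimensional.lowerSemicontinuous.lowerSemicontinuousOn _)
    (fun b _ => ((f.flip b).convexOn (convex_stdSimplex ℝ V)).quasiconvexOn)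
    (convex_stdSimplex ℝ W)
    ⟨_, single_mem_stdSimplex ℝ (Classical.arbitrary W)⟩
    (isCompact_stdSimplex ℝ W)
    (fun a _ =>
      (f a).continuous_of_finiteDimensional.upperSemicontinuous.upperSemicontinuousOn _)
    (fun a _ => ((f a).concaveOn (convex_stdSimplex ℝ W)).quasiconcaveOn)
  refine ⟨a, ha, b, hb, fun v x => ?_⟩
  have h := hsaddle _ (single_mem_stdSimplex ℝ v) _ (single_mem_stdSimplex ℝ x)
  simp only [f, Matrix.toLinearMap₂'_apply', Matrix.mulVec_single_one,
    single_one_dotProduct] at h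
  exact h

lemma exists_forall_le_prob [Nonempty V] [Nonempty W] {R : V → W → Prop} {η : ℝ}
    (h : ∀ p ∈ stdSimplex ℝ V, ∃ x, η ≤ prob p (R · x)) :
    ∃ w ∈ stdSimplex ℝ W, ∀ v, η ≤ prob w (R v) := by
  classical
  set M : Matrix V W ℝ := Matrix.of fun v x => if R v x then 1 else 0
  obtain ⟨a, ha, b, hb, hab⟩ := exists_forall_vecMul_le_mulVec M
  have hcol : ∀ x, Matrix.vecMul a M x = prob a (R · x) := fun x => by
    rw [prob_eq_sum_mul_ite]
    rfl
  have hrow : ∀ v, M.mulVec b v = prob b (R v) := fun v => by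
    rw [prob_eq_sum_mul_ite]
    exact sum_congr rfl fun x _ => mul_comm _ _
  obtain ⟨x, hx⟩ := h a ha
  exact ⟨b, hb, fun v => hx.trans (hcol x ▸ hrow v ▸ hab v x)⟩

end Minimax

lemma exists_transversal_card_le (D : ℕ) :
    ∃ c : ℕ, ∀ {V : Type u} {W : Type v} [Fintype V] [Fintype W] {R : V → W → Prop},
      HasSparseSupports D R → HasSparseSupports D (flip R) → (∀ v, ∃ x, R v x) → ∀ {ν : ℕ},
      (∀ I : Finset V, (I : Set V).Pairwise (fun u v => ¬ Meets R u v) → #I ≤ ν) →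
        ∃ T : Finset W, #T ≤ c * ν ∧ ∀ v, ∃ x ∈ T, R v x := by
  obtain ⟨c, hc⟩ := exists_transversal_of_le_prob.{u, v} D
  refine ⟨c * (2 * (4 * D + 2)), fun {V W} _ _ {R} hR hR' hne {ν} hind => ?_⟩
  rcases isEmpty_or_nonempty V with hV | ⟨⟨v⟩⟩
  · exact ⟨∅, Nat.zero_le _, hV.elim⟩
  have hν : 0 < ν := hind {v} (by simp only [coe_singleton, Set.pairwise_singleton])
  have : Nonempty V := ⟨v⟩
  have : Nonempty W := (hne v).nonempty
  obtain ⟨w, hw, hheavy⟩ := exists_forall_le_prob fun p hp => hR.exists_le_prob hne hν hind hp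
  obtain ⟨T, hT, hcov⟩ := hc hR hR' hw (N := 2 * ((4 * D + 2) * ν)) (by positivity)
    (by simpa only [Nat.cast_mul, Nat.cast_ofNat] using hheavy)
  exact ⟨T, hT.trans_eq (by ring), hcov⟩

section Distance

variable {V : Type*} {G : SimpleGraph V} {r : ℕ} {u v : V}

lemma edist_le_natCast_iff : G.edist u v ≤ r ↔ G.Reachable u v ∧ G.dist u v ≤ r := by
  constructor
  · intro h
    have hreach := SimpleGraph.edist_ne_top_iff_reachable.1
      (ne_top_of_le_ne_top (ENat.natCast_ne_top r) h)
    rw [← hreach.coe_dist_eq_edist] at h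
    exact ⟨hreach, Nat.cast_le.1 h⟩
  · rintro ⟨hreach, h⟩
    rw [← hreach.coe_dist_eq_edist]
    exact Nat.cast_le.2 h

lemma two_mul_lt_dist_of_not_meets (huv : G.Reachable u v)
    (h : ¬ Meets (fun u v => G.edist u v ≤ r) u v) : 2 * r < G.dist u v := by
  by_contra! hle
  obtain ⟨p, hp⟩ := huv.exists_walk_length_eq_dist
  refine h ⟨p.getVert r, (SimpleGraph.edist_le (p.take r)).trans ?_, ?_⟩
  · rw [p.take_length]
    exact Nat.cast_le.2 (min_le_left _ _)
  · refine SimpleGraph.edist_comm.trans_le ((SimpleGraph.edist_le (p.drop r)).trans ?_)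
    rw [p.drop_length]
    exact Nat.cast_le.2 (by lia)

end Distance

lemma exists_dominating_card_le (t : ℕ) :
    ∃ c : ℕ, ∀ {V : Type u} [Fintype V] {G : SimpleGraph V},
      ¬ GraphMinor (⊤ : SimpleGraph (Fin (t + 1))) G → ∀ {r ν : ℕ},
      (∀ I : Finset V, (I : Set V).Pairwise (fun u v => G.Reachable u v → 2 * r < G.dist u v) →
        #I ≤ ν) →
      ∃ T : Finset V, #T ≤ c * ν ∧ ∀ v, ∃ x ∈ T, G.Reachable x v ∧ G.dist x v ≤ r := by
  obtain ⟨c, hc⟩ := exists_transversal_card_le.{u, u} (2 ^ (t + 1))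
  refine ⟨c, fun {V} _ {G} hG {r ν} hind => ?_⟩
  have hsparse := hasSparseSupports_edist_le hG r
  have hflip : flip (fun u v => G.edist u v ≤ r) = fun u v => G.edist u v ≤ r := by
    funext u v
    rw [flip, SimpleGraph.edist_comm]
  obtain ⟨T, hT, hcov⟩ := hc hsparse (hflip.symm ▸ hsparse)
    (fun v => ⟨v, SimpleGraph.edist_self.trans_le zero_le⟩)
    fun I hI => hind I (hI.imp fun u v h hreach => two_mul_lt_dist_of_not_meets hreach h)
  refine ⟨T, hT, fun v => (hcov v).imp fun x ⟨hx, hvx⟩ => ⟨hx, ?_⟩⟩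
  exact edist_le_natCast_iff.1 (SimpleGraph.edist_comm.trans_le hvx)

/-- For every integer `t ≥ 1` there is a constant `c_t` such that in every
`K_t`-minor-free graph, for every `r ≥ 0`, the minimum size of an `r`-dominating set
is at most `c_t` times the maximum size of an `r`-independent set.
A set `S` is `r`-dominating if every vertex is at distance at most `r` from `S`, and
`r`-independent if any two distinct vertices of `S` are at distance at least `2r+1`. -/
theorem rDomination_le_const_mul_rIndependence_of_Kt_minor_free :
    ∀ t : ℕ, 1 ≤ t → ∃ c : ℕ,
      ∀ (V : Type) [Fintype V] (G : SimpleGraph V),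
        ¬ GraphMinor (⊤ : SimpleGraph (Fin t)) G →
        ∀ r : ℕ,
          sInf {n | ∃ S : Finset V,
              (∀ v : V, ∃ s ∈ S, G.Reachable s v ∧ G.dist s v ≤ r) ∧ S.card = n}
            ≤ c * sSup {n | ∃ S : Finset V,
              (∀ s ∈ S, ∀ s' ∈ S, s ≠ s' →
                G.Reachable s s' → 2 * r + 1 ≤ G.dist s s') ∧ S.card = n} := by
  intro t ht
  obtain ⟨t, rfl⟩ := Nat.exists_eq_add_of_le' ht
  obtain ⟨c, hc⟩ := exists_dominating_card_le t
  refine ⟨c, fun V _ G hG r => ?_⟩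
  set A := {n | ∃ S : Finset V, (∀ s ∈ S, ∀ s' ∈ S, s ≠ s' →
    G.Reachable s s' → 2 * r + 1 ≤ G.dist s s') ∧ S.card = n}
  have hbdd : BddAbove A := ⟨Fintype.card V, fun _ ⟨S, _, hS⟩ => hS ▸ card_le_univ S⟩
  obtain ⟨T, hT, hcov⟩ := hc hG fun I hI => le_csSup hbdd ⟨I, hI, rfl⟩
  exact (Nat.sInf_le (Exists.intro T ⟨hcov, rfl⟩)).trans hT
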